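/- Let C be a regular Ord-category. The following statements are equivalent, and they characterise regular Ord-Mal'tsev categories: (i) for any congruences R,S: X ↬ X on an object X, the composite R∘S is a congruence on X; (ii) R∘S ≅ S∘R for any congruences R,S: X ↬ X; (iii) R∘S ≅ S∘R for any effective congruences R,S: X ↬ X; (iv) every ideal D: X ↬ Y satisfies D∘D^*∘D ≅ D; (v) every reflexive ideal R: X ↬ X is a congruence. -/

import Mathlib

open CategoryTheory

universe w v u

/-- An `Ord`-enrichment of a category: a preorder on each hom-set,
preserved by composition on both sides. -/
class OrdEnrichment (C : Type u) [Category.{v} C] : Type (max u v) where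
  ord : ∀ {X Y : C}, (X ⟶ Y) → (X ⟶ Y) → Prop
  ord_refl : ∀ {X Y : C} (f : X ⟶ Y), ord f f
  ord_trans : ∀ {X Y : C} {f g h : X ⟶ Y}, ord f g → ord g h → ord f h
  precomp_ord : ∀ {X Y Z : C} (e : X ⟶ Y) {f g : Y ⟶ Z}, ord f g → ord (e ≫ f) (e ≫ g)
  postcomp_ord : ∀ {X Y Z : C} {f g : X ⟶ Y} (h : Y ⟶ Z), ord f g → ord (f ≫ h) (g ≫ h)

/-- The preorder on hom-sets of an `Ord`-category. -/
def homLe {C : Type u} [Category.{v} C] [OrdEnrichment C] {X Y : C} (f g : X ⟶ Y) : Prop :=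
  OrdEnrichment.ord f g

infixl:50 " ≼ " => homLe

section

variable {C : Type u} [Category.{v} C] [OrdEnrichment C]

/-- A full (ff-) morphism. -/
def IsFF {X Y : C} (m : X ⟶ Y) : Prop :=
  ∀ {A : C} (a a' : A ⟶ X), (a ≫ m) ≼ (a' ≫ m) → a ≼ a'

/-- An ff-monomorphism: a full monomorphism. -/
def IsFFMono {X Y : C} (m : X ⟶ Y) : Prop := IsFF m ∧ Mono m

/-- An so-morphism: a morphism left orthogonal to every ff-monomorphism. -/
def IsSO {A B : C} (e : A ⟶ B) : Prop :=
  ∀ {X Y : C} (m : X ⟶ Y), IsFFMono m → ∀ (u : A ⟶ X) (v : B ⟶ Y),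
    u ≫ m = e ≫ v → ∃ d : B ⟶ X, e ≫ d = u ∧ d ≫ m = v

/-- The (strict) comma object square for the ordered pair `(f, g)`. -/
structure IsCommaSq {X Y Z : C} (f : X ⟶ Y) (g : Z ⟶ Y) (P : C)
    (π₁ : P ⟶ X) (π₂ : P ⟶ Z) : Prop where
  le : (π₁ ≫ f) ≼ (π₂ ≫ g)
  lift : ∀ {A : C} (α : A ⟶ X) (β : A ⟶ Z), (α ≫ f) ≼ (β ≫ g) →
    ∃! h : A ⟶ P, h ≫ π₁ = α ∧ h ≫ π₂ = β
  lift_ord : ∀ {A : C} {h h' : A ⟶ P}, (h ≫ π₁) ≼ (h' ≫ π₁) → (h ≫ π₂) ≼ (h' ≫ π₂) → h ≼ h'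

/-- A 2-pullback square (pullback with the `Ord`-enriched universal property). -/
structure Is2Pullback {X Y Z : C} (f : X ⟶ Z) (g : Y ⟶ Z) (P : C)
    (p : P ⟶ X) (q : P ⟶ Y) : Prop where
  comm : p ≫ f = q ≫ g
  lift : ∀ {A : C} (a : A ⟶ X) (b : A ⟶ Y), a ≫ f = b ≫ g →
    ∃! h : A ⟶ P, h ≫ p = a ∧ h ≫ q = b
  lift_ord : ∀ {A : C} {h h' : A ⟶ P}, (h ≫ p) ≼ (h' ≫ p) → (h ≫ q) ≼ (h' ≫ q) → h ≼ h'

/-- A binary 2-product. -/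
structure Is2Product (X Y : C) (P : C) (p : P ⟶ X) (q : P ⟶ Y) : Prop where
  lift : ∀ {A : C} (a : A ⟶ X) (b : A ⟶ Y), ∃! h : A ⟶ P, h ≫ p = a ∧ h ≫ q = b
  lift_ord : ∀ {A : C} {h h' : A ⟶ P}, (h ≫ p) ≼ (h' ≫ p) → (h ≫ q) ≼ (h' ≫ q) → h ≼ h'

/-- A 2-equalizer. -/
structure Is2Equalizer {X Y : C} (f g : X ⟶ Y) (E : C) (i : E ⟶ X) : Prop where
  comm : i ≫ f = i ≫ g
  lift : ∀ {A : C} (a : A ⟶ X), a ≫ f = a ≫ g → ∃! h : A ⟶ E, h ≫ i = a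
  lift_ord : ∀ {A : C} {h h' : A ⟶ E}, (h ≫ i) ≼ (h' ≫ i) → h ≼ h'

/-- A bicoinserter of a parallel pair. -/
structure IsBicoinserter {X A E : C} (a b : X ⟶ A) (e : A ⟶ E) : Prop where
  le : (a ≫ e) ≼ (b ≫ e)
  desc : ∀ {F : C} (f : A ⟶ F), (a ≫ f) ≼ (b ≫ f) →
    ∃ t : E ⟶ F, (e ≫ t) ≼ f ∧ f ≼ (e ≫ t)
  desc_ord : ∀ {F : C} {f f' : A ⟶ F} {t t' : E ⟶ F},
    (e ≫ t) ≼ f → f ≼ (e ≫ t) → (e ≫ t') ≼ f' → f' ≼ (e ≫ t') → f ≼ f' → t ≼ t'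

/-- A relation from `X` to `Y` in an `Ord`-category: a jointly ff-monomorphic span. -/
structure RelStr (X Y : C) : Type (max u v) where
  obj : C
  p : obj ⟶ X
  q : obj ⟶ Y
  jointly_ff : ∀ {A : C} (a a' : A ⟶ obj), (a ≫ p) ≼ (a' ≫ p) → (a ≫ q) ≼ (a' ≫ q) → a ≼ a'
  jointly_mono : ∀ {A : C} (a a' : A ⟶ obj), a ≫ p = a' ≫ p → a ≫ q = a' ≫ q → a = a'

/-- `(x, y) ∈_A R`. -/
def RelStr.Mem {X Y : C} (R : RelStr X Y) {A : C} (x : A ⟶ X) (y : A ⟶ Y) : Prop :=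
  ∃ h : A ⟶ R.obj, h ≫ R.p = x ∧ h ≫ R.q = y

/-- `R ⊆ S`: `R` factors through `S` (over `X × Y`). -/
def RelStr.Sub {X Y : C} (R S : RelStr X Y) : Prop :=
  ∃ φ : R.obj ⟶ S.obj, φ ≫ S.p = R.p ∧ φ ≫ S.q = R.q

/-- `R ≅ S`: mutual factorisation. -/
def RelStr.Iso {X Y : C} (R S : RelStr X Y) : Prop := R.Sub S ∧ S.Sub R

/-- The opposite relation `R°`. -/
def RelStr.op {X Y : C} (R : RelStr X Y) : RelStr Y X where
  obj := R.obj
  p := R.q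
  q := R.p
  jointly_ff := fun a a' h1 h2 => R.jointly_ff a a' h2 h1
  jointly_mono := fun a a' h1 h2 => R.jointly_mono a a' h2 h1

/-- A relation is an (order) ideal when it is closed under lowering the first
coordinate and raising the second coordinate. -/
def IsIdealRel {X Y : C} (R : RelStr X Y) : Prop :=
  ∀ {A : C} (x x' : A ⟶ X) (y y' : A ⟶ Y), x' ≼ x → R.Mem x y → y ≼ y' → R.Mem x' y'

/-- The relation `f_♯` given by the span `(1_X, f)`. -/
def sharpRel {X Y : C} (f : X ⟶ Y) : RelStr X Y where
  obj := X
  p := 𝟙 X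
  q := f
  jointly_ff := fun a a' h1 _ => by simpa using h1
  jointly_mono := fun a a' h1 _ => by simpa using h1

/-- The relation `f°`, the opposite of `f_♯`. -/
def cosharpRel {X Y : C} (f : X ⟶ Y) : RelStr Y X := (sharpRel f).op

/-- `M` is the meet (intersection) `R ∧ S` of two relations. -/
def IsMeetRel {X Y : C} (R S M : RelStr X Y) : Prop :=
  M.Sub R ∧ M.Sub S ∧
    ∀ {A : C} (x : A ⟶ X) (y : A ⟶ Y), R.Mem x y → S.Mem x y → M.Mem x y

/-- `T` is the composite `S ∘ R` of the relations `R : X ↬ Y` and `S : Y ↬ Z`,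
obtained via the (so-morphism, ff-monomorphism) factorisation of the span
given by the 2-pullback over the middle object. -/
def IsCompositeRel {X Y Z : C} (R : RelStr X Y) (S : RelStr Y Z) (T : RelStr X Z) : Prop :=
  ∃ (P : C) (p₁ : P ⟶ R.obj) (p₂ : P ⟶ S.obj) (e : P ⟶ T.obj),
    Is2Pullback R.q S.p P p₁ p₂ ∧ IsSO e ∧ e ≫ T.p = p₁ ≫ R.p ∧ e ≫ T.q = p₂ ≫ S.q

/-- `R` is the ideal `f_* = f / 1_Y : X ↬ Y`. -/
def IsStarRel {X Y : C} (f : X ⟶ Y) (R : RelStr X Y) : Prop :=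
  IsCommaSq f (𝟙 Y) R.obj R.p R.q

/-- `R` is the ideal `f^* = 1_Y / f : Y ↬ X`. -/
def IsCostarRel {X Y : C} (f : X ⟶ Y) (R : RelStr Y X) : Prop :=
  IsCommaSq (𝟙 Y) f R.obj R.p R.q

/-- `R` is the identity ideal `I_X = 1_X / 1_X`. -/
def IsIdRel (X : C) (R : RelStr X X) : Prop :=
  IsCommaSq (𝟙 X) (𝟙 X) R.obj R.p R.q

/-- `S` is the 2-pullback of the relation `R ↣ X × Y` along `f × g`. -/
def IsRelPullback {X Y U V : C} (R : RelStr X Y) (f : U ⟶ X) (g : V ⟶ Y)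
    (S : RelStr U V) : Prop :=
  ∃ h : S.obj ⟶ R.obj, h ≫ R.p = S.p ≫ f ∧ h ≫ R.q = S.q ≫ g ∧
    ∀ {A : C} (a : A ⟶ U) (b : A ⟶ V) (c : A ⟶ R.obj),
      c ≫ R.p = a ≫ f → c ≫ R.q = b ≫ g →
      ∃ d : A ⟶ S.obj, d ≫ S.p = a ∧ d ≫ S.q = b ∧ d ≫ h = c

/-- A binary 2-coproduct. -/
structure Is2Coproduct (X Y : C) (P : C) (i : X ⟶ P) (j : Y ⟶ P) : Prop where
  desc : ∀ {A : C} (a : X ⟶ A) (b : Y ⟶ A), ∃! h : P ⟶ A, i ≫ h = a ∧ j ≫ h = b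
  desc_ord : ∀ {A : C} {h h' : P ⟶ A}, (i ≫ h) ≼ (i ≫ h') → (j ≫ h) ≼ (j ≫ h') → h ≼ h'

/-- A ternary 2-coproduct. -/
structure Is3Coproduct (X Y Z : C) (P : C) (i : X ⟶ P) (j : Y ⟶ P) (k : Z ⟶ P) : Prop where
  desc : ∀ {A : C} (a : X ⟶ A) (b : Y ⟶ A) (c : Z ⟶ A),
    ∃! h : P ⟶ A, i ≫ h = a ∧ j ≫ h = b ∧ k ≫ h = c
  desc_ord : ∀ {A : C} {h h' : P ⟶ A},
    (i ≫ h) ≼ (i ≫ h') → (j ≫ h) ≼ (j ≫ h') → (k ≫ h) ≼ (k ≫ h') → h ≼ h'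

/-- Reflexivity of a relation on `X`: the diagonal factors through it. -/
def ReflexiveRel {X : C} (R : RelStr X X) : Prop := R.Mem (𝟙 X) (𝟙 X)

/-- Transitivity of a relation on `X`: `R ∘ R ⊆ R`. -/
def TransitiveRel {X : C} (R : RelStr X X) : Prop :=
  ∀ T : RelStr X X, IsCompositeRel R R T → T.Sub R

/-- A congruence: a reflexive and transitive ideal. -/
def IsCongruence {X : C} (R : RelStr X X) : Prop :=
  IsIdealRel R ∧ ReflexiveRel R ∧ TransitiveRel R

/-- An effective congruence: `R ≅ f^* ∘ f_*` for some morphism `f`. -/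
def EffectiveCongruence {X : C} (R : RelStr X X) : Prop :=
  ∃ (Y : C) (f : X ⟶ Y) (Fstar : RelStr X Y) (Fco : RelStr Y X) (T : RelStr X X),
    IsStarRel f Fstar ∧ IsCostarRel f Fco ∧ IsCompositeRel Fstar Fco T ∧ R.Iso T

/-- The `Ord`-enriched difunctionality property of a relation. -/
def OrdDifunctional {X Y : C} (D : RelStr X Y) : Prop :=
  ∀ {A : C} (x u u' : A ⟶ X) (y y' v : A ⟶ Y),
    D.Mem x y → y ≼ y' → D.Mem u y' → u ≼ u' → D.Mem u' v → D.Mem x v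

end

/-- A regular `Ord`-category: finite weighted limits, an
(so-morphism, ff-monomorphism) factorisation system, so-morphisms stable under
2-pullbacks, and every so-morphism the bicoinserter of its comma object projections. -/
structure IsRegularOrd (C : Type u) [Category.{v} C] [OrdEnrichment C] : Prop where
  hasTerminal : ∃ T : C, ∀ A : C, ∃ f : A ⟶ T, ∀ g : A ⟶ T, g = f
  has2Products : ∀ X Y : C, ∃ (P : C) (p : P ⟶ X) (q : P ⟶ Y), Is2Product X Y P p q
  has2Equalizers : ∀ {X Y : C} (f g : X ⟶ Y), ∃ (E : C) (i : E ⟶ X), Is2Equalizer f g E i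
  has2Pullbacks : ∀ {X Y Z : C} (f : X ⟶ Z) (g : Y ⟶ Z),
    ∃ (P : C) (p : P ⟶ X) (q : P ⟶ Y), Is2Pullback f g P p q
  hasCommaObjects : ∀ {X Y Z : C} (f : X ⟶ Y) (g : Z ⟶ Y),
    ∃ (P : C) (p : P ⟶ X) (q : P ⟶ Z), IsCommaSq f g P p q
  fact : ∀ {X Y : C} (f : X ⟶ Y), ∃ (I : C) (e : X ⟶ I) (m : I ⟶ Y),
    IsSO e ∧ IsFFMono m ∧ e ≫ m = f
  so_pullback_stable : ∀ {X Y Z P : C} (f : X ⟶ Z) (g : Y ⟶ Z) (p : P ⟶ X) (q : P ⟶ Y),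
    Is2Pullback f g P p q → IsSO g → IsSO p
  so_bicoinserter : ∀ {A B P : C} (e : A ⟶ B), IsSO e →
    ∀ (π₁ π₂ : P ⟶ A), IsCommaSq e e P π₁ π₂ → IsBicoinserter π₁ π₂ e

/-- An `Ord`-Mal'tsev category: every ideal is `Ord`-difunctional. -/
def IsOrdMaltsev (C : Type u) [Category.{v} C] [OrdEnrichment C] : Prop :=
  ∀ (X Y : C) (D : RelStr X Y), IsIdealRel D → OrdDifunctional D

/-- An `Ord`-W-Mal'tsev object: every ideal is `Ord`-difunctional with respect to
generalised elements with domain `Y`. -/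
def IsOrdWMaltsevObj {C : Type u} [Category.{v} C] [OrdEnrichment C] (Y : C) : Prop :=
  ∀ (X Z : C) (R : RelStr X Z), IsIdealRel R →
    ∀ (x u u' : Y ⟶ X) (z z' v : Y ⟶ Z),
      R.Mem x z → z ≼ z' → R.Mem u z' → u ≼ u' → R.Mem u' v → R.Mem x v


section Statement15

variable (C : Type u) [Category.{v} C] [OrdEnrichment C]

/-- (i) the composite of two congruences is a congruence. -/
def CongruencesCompose : Prop :=
  ∀ (X : C) (R S : RelStr X X), IsCongruence R → IsCongruence S →
    ∀ T : RelStr X X, IsCompositeRel S R T → IsCongruence T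

/-- (ii) congruences 2-permute. -/
def CongruencesPermute : Prop :=
  ∀ (X : C) (R S : RelStr X X), IsCongruence R → IsCongruence S →
    ∀ T T' : RelStr X X, IsCompositeRel S R T → IsCompositeRel R S T' → T.Iso T'

/-- (iii) effective congruences 2-permute. -/
def EffectiveCongruencesPermute : Prop :=
  ∀ (X : C) (R S : RelStr X X),
    IsCongruence R → EffectiveCongruence R → IsCongruence S → EffectiveCongruence S →
    ∀ T T' : RelStr X X, IsCompositeRel S R T → IsCompositeRel R S T' → T.Iso T'

/-- (iv) every ideal `D` satisfies `D ∘ D^* ∘ D ≅ D`. -/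
def IdealsDifunctional : Prop :=
  ∀ (X Y : C) (D : RelStr X Y), IsIdealRel D →
    ∀ (D1star : RelStr D.obj X) (D2co : RelStr Y D.obj) (Dupper : RelStr Y X)
      (U1 : RelStr X X) (U2 : RelStr X Y),
      IsStarRel D.p D1star → IsCostarRel D.q D2co →
      IsCompositeRel D2co D1star Dupper →
      IsCompositeRel D Dupper U1 → IsCompositeRel U1 D U2 → U2.Iso D

/-- (v) every reflexive ideal is a congruence. -/
def ReflexiveIdealsAreCongruences : Prop :=
  ∀ (X : C) (R : RelStr X X), IsIdealRel R → ReflexiveRel R → IsCongruence R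

section Helpers

variable {C}

theorem le_rfl' {X Y : C} (f : X ⟶ Y) : f ≼ f := OrdEnrichment.ord_refl f

theorem le_tr {X Y : C} {f g h : X ⟶ Y} (a : f ≼ g) (b : g ≼ h) : f ≼ h :=
  OrdEnrichment.ord_trans a b

theorem le_pre {X Y Z : C} (e : X ⟶ Y) {f g : Y ⟶ Z} (h : f ≼ g) : (e ≫ f) ≼ (e ≫ g) :=
  OrdEnrichment.precomp_ord e h

theorem le_post {X Y Z : C} {f g : X ⟶ Y} (k : Y ⟶ Z) (h : f ≼ g) : (f ≫ k) ≼ (g ≫ k) :=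
  OrdEnrichment.postcomp_ord k h

theorem so_comp {X Y Z : C} {e : X ⟶ Y} {f : Y ⟶ Z} (he : IsSO e) (hf : IsSO f) :
    IsSO (e ≫ f) := by
  intro P Q m hm u v h
  obtain ⟨d, hd1, hd2⟩ := he m hm u (f ≫ v) (by simpa using h)
  obtain ⟨d', h1, h2⟩ := hf m hm d v hd2
  exact ⟨d', by rw [Category.assoc, h1, hd1], h2⟩

theorem so_id (X : C) : IsSO (𝟙 X) := by
  intro P Q m hm u v h
  exact ⟨u, by simp, by simpa using h⟩

theorem mem_pre {X Y A B : C} {R : RelStr X Y} (c : B ⟶ A) {x : A ⟶ X} {y : A ⟶ Y}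
    (h : R.Mem x y) : R.Mem (c ≫ x) (c ≫ y) := by
  obtain ⟨k, rfl, rfl⟩ := h
  exact ⟨c ≫ k, by simp, by simp⟩

theorem sub_iff {X Y : C} (R S : RelStr X Y) :
    R.Sub S ↔ ∀ {A : C} (x : A ⟶ X) (y : A ⟶ Y), R.Mem x y → S.Mem x y := by
  constructor
  · rintro ⟨φ, h1, h2⟩ A x y ⟨k, rfl, rfl⟩
    exact ⟨k ≫ φ, by simp [h1], by simp [h2]⟩
  · intro h
    exact h R.p R.q ⟨𝟙 _, by simp, by simp⟩

theorem mem_local (hC : IsRegularOrd C) {X Y A B : C} (R : RelStr X Y) {c : B ⟶ A}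
    (hc : IsSO c) {x : A ⟶ X} {y : A ⟶ Y} (h : R.Mem (c ≫ x) (c ≫ y)) : R.Mem x y := by
  obtain ⟨P, p, q, hP⟩ := hC.has2Products X Y
  obtain ⟨m, ⟨hm1, hm2⟩, -⟩ := hP.lift R.p R.q
  obtain ⟨w, ⟨hw1, hw2⟩, -⟩ := hP.lift x y
  obtain ⟨k, hk1, hk2⟩ := h
  have hm : IsFFMono m := by
    refine ⟨?_, ⟨?_⟩⟩
    · intro Z a a' haa
      have h1 := le_post p haa
      have h2 := le_post q haa
      simp only [Category.assoc, hm1, hm2] at h1 h2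
      exact R.jointly_ff a a' h1 h2
    · intro Z a a' haa
      have h1 := congrArg (· ≫ p) haa
      have h2 := congrArg (· ≫ q) haa
      simp only [Category.assoc, hm1, hm2] at h1 h2
      exact R.jointly_mono a a' h1 h2
  have e : k ≫ m = c ≫ w := by
    obtain ⟨t, -, ht⟩ := hP.lift (c ≫ x) (c ≫ y)
    rw [ht (k ≫ m) ⟨by simp [hm1, hk1], by simp [hm2, hk2]⟩,
      ht (c ≫ w) ⟨by simp [hw1], by simp [hw2]⟩]
  obtain ⟨d, -, hd⟩ := hc m hm k w e
  exact ⟨d, by rw [← hm1, ← Category.assoc, hd, hw1], by rw [← hm2, ← Category.assoc, hd, hw2]⟩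

theorem comp_intro (hC : IsRegularOrd C) {X Y Z : C} {R : RelStr X Y} {S : RelStr Y Z}
    {T : RelStr X Z} (hT : IsCompositeRel R S T) {A B : C} {c : B ⟶ A} (hc : IsSO c)
    {x : A ⟶ X} {z : A ⟶ Z} {y : B ⟶ Y} (h1 : R.Mem (c ≫ x) y) (h2 : S.Mem y (c ≫ z)) :
    T.Mem x z := by
  apply mem_local hC T hc
  obtain ⟨P, p₁, p₂, e, hP, he, e1, e2⟩ := hT
  obtain ⟨k, hk1, hk2⟩ := h1
  obtain ⟨l, hl1, hl2⟩ := h2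
  obtain ⟨t, ⟨ht1, ht2⟩, -⟩ := hP.lift k l (hk2.trans hl1.symm)
  refine ⟨t ≫ e, ?_, ?_⟩
  · rw [Category.assoc, e1, ← Category.assoc, ht1, hk1]
  · rw [Category.assoc, e2, ← Category.assoc, ht2, hl2]

theorem comp_intro' (hC : IsRegularOrd C) {X Y Z : C} {R : RelStr X Y} {S : RelStr Y Z}
    {T : RelStr X Z} (hT : IsCompositeRel R S T) {A : C}
    {x : A ⟶ X} {z : A ⟶ Z} {y : A ⟶ Y} (h1 : R.Mem x y) (h2 : S.Mem y z) :
    T.Mem x z :=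
  comp_intro hC hT (so_id A) (y := y) (by simpa using h1) (by simpa using h2)

theorem comp_elim (hC : IsRegularOrd C) {X Y Z : C} {R : RelStr X Y} {S : RelStr Y Z}
    {T : RelStr X Z} (hT : IsCompositeRel R S T) {A : C}
    {x : A ⟶ X} {z : A ⟶ Z} (h : T.Mem x z) :
    ∃ (B : C) (c : B ⟶ A) (y : B ⟶ Y), IsSO c ∧ R.Mem (c ≫ x) y ∧ S.Mem y (c ≫ z) := by
  obtain ⟨P, p₁, p₂, e, hP, he, e1, e2⟩ := hT
  obtain ⟨k, rfl, rfl⟩ := h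
  obtain ⟨Q, c, d, hQ⟩ := hC.has2Pullbacks k e
  refine ⟨Q, c, d ≫ p₁ ≫ R.q, hC.so_pullback_stable _ _ _ _ hQ he, ⟨d ≫ p₁, ?_, by simp⟩,
    ⟨d ≫ p₂, ?_, ?_⟩⟩
  · rw [Category.assoc, ← e1, ← Category.assoc, ← hQ.comm, Category.assoc]
  · rw [Category.assoc, hP.comm]
  · rw [Category.assoc, ← e2, ← Category.assoc, ← hQ.comm, Category.assoc]

theorem comp_exists (hC : IsRegularOrd C) {X Y Z : C} (R : RelStr X Y) (S : RelStr Y Z) :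
    ∃ T : RelStr X Z, IsCompositeRel R S T := by
  obtain ⟨P, p₁, p₂, hP⟩ := hC.has2Pullbacks R.q S.p
  obtain ⟨Q, p, q, hQ⟩ := hC.has2Products X Z
  obtain ⟨w, ⟨hw1, hw2⟩, -⟩ := hQ.lift (p₁ ≫ R.p) (p₂ ≫ S.q)
  obtain ⟨I, e, m, he, ⟨hm1, hm2⟩, hem⟩ := hC.fact w
  refine ⟨⟨I, m ≫ p, m ≫ q, ?_, ?_⟩, P, p₁, p₂, e, hP, he, ?_, ?_⟩
  · intro A a a' h1 h2
    exact hm1 a a' (hQ.lift_ord (by simpa using h1) (by simpa using h2))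
  · intro A a a' h1 h2
    apply hm2.right_cancellation
    obtain ⟨t, -, ht⟩ := hQ.lift ((a ≫ m) ≫ p) ((a ≫ m) ≫ q)
    rw [ht (a ≫ m) ⟨rfl, rfl⟩, ht (a' ≫ m) ⟨by simpa using h1.symm, by simpa using h2.symm⟩]
  · change e ≫ m ≫ p = _
    rw [← Category.assoc, hem, hw1]
  · change e ≫ m ≫ q = _
    rw [← Category.assoc, hem, hw2]

theorem comp_ideal (hC : IsRegularOrd C) {X Y Z : C} {R : RelStr X Y} {S : RelStr Y Z}
    {T : RelStr X Z} (hT : IsCompositeRel R S T) (hR : IsIdealRel R) (hS : IsIdealRel S) :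
    IsIdealRel T := by
  intro A x x' z z' hx h hz
  obtain ⟨B, c, y, hc, h1, h2⟩ := comp_elim hC hT h
  exact comp_intro hC hT hc (hR _ _ _ _ (le_pre c hx) h1 (le_rfl' _))
    (hS _ _ _ _ (le_rfl' _) h2 (le_pre c hz))

theorem trans_iff (hC : IsRegularOrd C) {X : C} (R : RelStr X X) :
    TransitiveRel R ↔ ∀ {A : C} (x y z : A ⟶ X), R.Mem x y → R.Mem y z → R.Mem x z := by
  constructor
  · intro h A x y z h1 h2
    obtain ⟨T, hT⟩ := comp_exists hC R R
    exact (sub_iff T R).1 (h T hT) _ _ (comp_intro' hC hT h1 h2)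
  · intro h T hT
    rw [sub_iff]
    intro A x z hm
    obtain ⟨B, c, y, hc, h1, h2⟩ := comp_elim hC hT hm
    exact mem_local hC R hc (h _ _ _ h1 h2)

theorem refl_mem {X A : C} {R : RelStr X X} (h : ReflexiveRel R) (x : A ⟶ X) : R.Mem x x := by
  have := mem_pre x h
  simpa using this

theorem comma_exists (hC : IsRegularOrd C) {X Y Z : C} (f : X ⟶ Y) (g : Z ⟶ Y) :
    ∃ K : RelStr X Z, IsCommaSq f g K.obj K.p K.q := by
  obtain ⟨P, p, q, hP⟩ := hC.hasCommaObjects f g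
  refine ⟨⟨P, p, q, fun a a' h1 h2 => hP.lift_ord h1 h2, ?_⟩, hP⟩
  intro A a a' h1 h2
  obtain ⟨t, -, ht⟩ := hP.lift (a ≫ p) (a ≫ q) (by simpa using le_pre a hP.le)
  rw [ht a ⟨rfl, rfl⟩, ht a' ⟨h1.symm, h2.symm⟩]

theorem mem_comma {X Y Z : C} {f : X ⟶ Y} {g : Z ⟶ Y} {K : RelStr X Z}
    (hK : IsCommaSq f g K.obj K.p K.q) {A : C} (a : A ⟶ X) (b : A ⟶ Z) :
    K.Mem a b ↔ (a ≫ f) ≼ (b ≫ g) := by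
  constructor
  · rintro ⟨k, rfl, rfl⟩
    simpa using le_pre k hK.le
  · intro h
    obtain ⟨t, ht, -⟩ := hK.lift a b h
    exact ⟨t, ht⟩

theorem kernel_exists (hC : IsRegularOrd C) {X Y : C} (f : X ⟶ Y) :
    ∃ K : RelStr X X, IsCongruence K ∧ EffectiveCongruence K ∧
      ∀ {A : C} (a b : A ⟶ X), K.Mem a b ↔ (a ≫ f) ≼ (b ≫ f) := by
  obtain ⟨K, hK⟩ := comma_exists hC f f
  have hm : ∀ {A : C} (a b : A ⟶ X), K.Mem a b ↔ (a ≫ f) ≼ (b ≫ f) :=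
    fun a b => mem_comma hK a b
  refine ⟨K, ⟨?_, ?_, ?_⟩, ?_, hm⟩
  · intro A x x' y y' hx h hy
    rw [hm] at h ⊢
    exact le_tr (le_post f hx) (le_tr h (le_post f hy))
  · exact (hm _ _).2 (le_rfl' _)
  · rw [trans_iff hC]
    intro A x y z h1 h2
    rw [hm] at h1 h2 ⊢
    exact le_tr h1 h2
  · obtain ⟨F, hF⟩ := comma_exists hC f (𝟙 Y)
    obtain ⟨G, hG⟩ := comma_exists hC (𝟙 Y) f
    obtain ⟨T, hT⟩ := comp_exists hC F G
    refine ⟨Y, f, F, G, T, hF, hG, hT, ?_, ?_⟩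
    · rw [sub_iff]
      intro A a b h
      rw [hm] at h
      refine comp_intro' hC hT (y := a ≫ f) ?_ ?_
      · rw [mem_comma hF]; simpa using le_rfl' _
      · rw [mem_comma hG]; simpa using h
    · rw [sub_iff]
      intro A a b h
      obtain ⟨B, c, y, hc, h1, h2⟩ := comp_elim hC hT h
      rw [mem_comma hF] at h1
      rw [mem_comma hG] at h2
      refine mem_local hC K hc ?_
      rw [hm]
      simp only [Category.comp_id] at h1 h2
      exact le_tr h1 h2

theorem pb_exists (hC : IsRegularOrd C) {X Y U V : C} (D : RelStr X Y) (f : U ⟶ X) (g : V ⟶ Y) :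
    ∃ E : RelStr U V, ∀ {A : C} (a : A ⟶ U) (b : A ⟶ V),
      E.Mem a b ↔ D.Mem (a ≫ f) (b ≫ g) := by
  obtain ⟨P, p₁, p₂, hP⟩ := hC.has2Pullbacks f D.p
  obtain ⟨Q, q₁, q₂, hQ⟩ := hC.has2Pullbacks (p₂ ≫ D.q) g
  have hQc : q₁ ≫ p₂ ≫ D.q = q₂ ≫ g := hQ.comm
  refine ⟨⟨Q, q₁ ≫ p₁, q₂, ?_, ?_⟩, ?_⟩
  · intro A a a' h1 h2
    refine hQ.lift_ord (hP.lift_ord (by simpa using h1) (D.jointly_ff _ _ ?_ ?_)) h2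
    · have := le_post f h1
      simpa [hP.comm] using this
    · have := le_post g h2
      simpa [← hQc] using this
  · intro A a a' h1 h2
    have k1 : (a ≫ q₁) ≫ p₂ = (a' ≫ q₁) ≫ p₂ := by
      apply D.jointly_mono
      · have := congrArg (· ≫ f) h1
        simpa [hP.comm] using this
      · have := congrArg (· ≫ g) h2
        simpa [← hQc] using this
    have k2 : a ≫ q₁ = a' ≫ q₁ := by
      obtain ⟨t, -, ht⟩ := hP.lift ((a ≫ q₁) ≫ p₁) ((a ≫ q₁) ≫ p₂) (by simp [hP.comm])
      rw [ht (a ≫ q₁) ⟨rfl, rfl⟩, ht (a' ≫ q₁) ⟨by simpa using h1.symm, k1.symm⟩]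
    obtain ⟨t, -, ht⟩ := hQ.lift (a ≫ q₁) (a ≫ q₂) (by simp [hQc])
    rw [ht a ⟨rfl, rfl⟩, ht a' ⟨k2.symm, h2.symm⟩]
  · intro A a b
    constructor
    · rintro ⟨k, rfl, rfl⟩
      exact ⟨k ≫ q₁ ≫ p₂, by simp [hP.comm], by simp [hQc]⟩
    · rintro ⟨k, hk1, hk2⟩
      obtain ⟨s, ⟨hs1, hs2⟩, -⟩ := hP.lift a k hk1.symm
      obtain ⟨t, ⟨ht1, ht2⟩, -⟩ := hQ.lift s b (by rw [← Category.assoc, hs2, hk2])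
      refine ⟨t, ?_, ht2⟩
      change t ≫ q₁ ≫ p₁ = a
      rw [← Category.assoc, ht1, hs1]

theorem maltsev_iff_refl (hC : IsRegularOrd C) :
    ReflexiveIdealsAreCongruences C ↔ IsOrdMaltsev C := by
  constructor
  · intro h X Y D hD A x u u' y y' v h1 hy h2 hu h3
    obtain ⟨E, hE⟩ := pb_exists hC D D.p D.q
    have hc := h D.obj E
      (by
        intro A a a' b b' ha hab hb
        rw [hE] at hab ⊢
        exact hD _ _ _ _ (le_post _ ha) hab (le_post _ hb))
      ((hE _ _).2 ⟨𝟙 _, rfl, rfl⟩)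
    have ht := fun {Q : C} => (trans_iff hC E).1 hc.2.2 (A := Q)
    have k1 := hD _ _ _ _ (le_rfl' _) h1 hy
    have k2 := hD _ _ _ _ hu h3 (le_rfl' _)
    obtain ⟨a, rfl, rfl⟩ := h1
    obtain ⟨b, rfl, rfl⟩ := h2
    obtain ⟨c, rfl, rfl⟩ := h3
    exact (hE a c).1 (ht a b c ((hE _ _).2 k1) ((hE _ _).2 k2))
  · intro h X R hR hr
    refine ⟨hR, hr, ?_⟩
    rw [trans_iff hC]
    intro A x y z h1 h2
    exact h X X R hR x y y y y z h1 (le_rfl' _) (refl_mem hr y) (le_rfl' _) h2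

theorem maltsev_iff_difunctional (hC : IsRegularOrd C) :
    IdealsDifunctional C ↔ IsOrdMaltsev C := by
  constructor
  · intro h X Y D hD A x u u' y y' v h1 hy h2 hu h3
    obtain ⟨F, hF⟩ := comma_exists hC D.p (𝟙 X)
    obtain ⟨G, hG⟩ := comma_exists hC (𝟙 Y) D.q
    obtain ⟨V, hV⟩ := comp_exists hC G F
    obtain ⟨U1, hU1⟩ := comp_exists hC D V
    obtain ⟨U2, hU2⟩ := comp_exists hC U1 D
    refine (sub_iff U2 D).1 (h X Y D hD F G V U1 U2 hF hG hV hU1 hU2).1 _ _ ?_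
    obtain ⟨b, rfl, rfl⟩ := h2
    refine comp_intro' hC hU2 (comp_intro' hC hU1 h1 (comp_intro' hC hV (y := b) ?_ ?_)) h3
    · rw [mem_comma hG]; simpa using hy
    · rw [mem_comma hF]; simpa using hu
  · intro h X Y D hD F G V U1 U2 hF hG hV hU1 hU2
    constructor
    · rw [sub_iff]
      intro A x v hm
      obtain ⟨B, c, w, hc, h1, h2⟩ := comp_elim hC hU2 hm
      obtain ⟨B', c', y, hc', h3, h4⟩ := comp_elim hC hU1 h1
      obtain ⟨B'', c'', d, hc'', h5, h6⟩ := comp_elim hC hV h4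
      have h5 := (mem_comma hG _ _).1 h5
      have h6 := (mem_comma hF _ _).1 h6
      simp only [Category.comp_id] at h5 h6
      refine mem_local hC D hc (mem_local hC D hc' (mem_local hC D hc'' ?_))
      exact h X Y D hD _ _ _ _ _ _ (mem_pre c'' h3) h5 ⟨d, rfl, rfl⟩ h6
        (mem_pre c'' (mem_pre c' h2))
    · rw [sub_iff]
      rintro A _ _ ⟨b, rfl, rfl⟩
      have hb : D.Mem (b ≫ D.p) (b ≫ D.q) := ⟨b, rfl, rfl⟩
      refine comp_intro' hC hU2 (comp_intro' hC hU1 hb (comp_intro' hC hV (y := b) ?_ ?_)) hb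
      · rw [mem_comma hG]; simpa using le_rfl' _
      · rw [mem_comma hF]; simpa using le_rfl' _

theorem refl_compose (hC : IsRegularOrd C) (h : ReflexiveIdealsAreCongruences C) :
    CongruencesCompose C := by
  intro X R S hR hS T hT
  exact h X T (comp_ideal hC hT hS.1 hR.1) (comp_intro' hC hT hS.2.1 hR.2.1)

theorem compose_permute (hC : IsRegularOrd C) (h : CongruencesCompose C) :
    CongruencesPermute C := by
  have key : ∀ (X : C) (R S : RelStr X X), IsCongruence R → IsCongruence S →
    ∀ T T' : RelStr X X, IsCompositeRel S R T → IsCompositeRel R S T' → T'.Sub T := by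
    intro X R S hR hS T T' hT hT'
    have ht := fun {Q : C} => (trans_iff hC T).1 (h X R S hR hS T hT).2.2 (A := Q)
    rw [sub_iff]
    intro A x z hm
    obtain ⟨B, c, y, hc, h1, h2⟩ := comp_elim hC hT' hm
    refine mem_local hC T hc (ht _ y _ ?_ ?_)
    · exact comp_intro' hC hT (refl_mem hS.2.1 _) h1
    · exact comp_intro' hC hT h2 (refl_mem hR.2.1 _)
  intro X R S hR hS T T' hT hT'
  exact ⟨key X S R hS hR T' T hT' hT, key X R S hR hS T T' hT hT'⟩

theorem effective_maltsev (hC : IsRegularOrd C) (h : EffectiveCongruencesPermute C) :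
    IsOrdMaltsev C := by
  intro X Y D hD A x u u' y y' v h1 hy h2 hu h3
  obtain ⟨R, hR, hR', hRm⟩ := kernel_exists hC D.q
  obtain ⟨S, hS, hS', hSm⟩ := kernel_exists hC D.p
  obtain ⟨T, hT⟩ := comp_exists hC S R
  obtain ⟨T', hT'⟩ := comp_exists hC R S
  obtain ⟨a, rfl, rfl⟩ := h1
  obtain ⟨b, rfl, rfl⟩ := h2
  obtain ⟨d, rfl, rfl⟩ := h3
  have hm := (sub_iff T' T).1 (h D.obj R S hR hR' hS hS' T T' hT hT').2 a d
    (comp_intro' hC hT' ((hRm a b).2 hy) ((hSm b d).2 hu))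
  obtain ⟨B, c, w, hc, k1, k2⟩ := comp_elim hC hT hm
  rw [hSm] at k1
  rw [hRm] at k2
  refine mem_local hC D hc ?_
  simp only [Category.assoc] at k1 k2
  exact hD _ _ _ _ k1 ⟨w, rfl, rfl⟩ k2

end Helpers

/-- The characterisations of regular `Ord`-Mal'tsev categories. -/
theorem statement15 (hC : IsRegularOrd C) :
    (CongruencesCompose C ↔ CongruencesPermute C) ∧
    (CongruencesPermute C ↔ EffectiveCongruencesPermute C) ∧
    (EffectiveCongruencesPermute C ↔ IdealsDifunctional C) ∧
    (IdealsDifunctional C ↔ ReflexiveIdealsAreCongruences C) ∧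
    (ReflexiveIdealsAreCongruences C ↔ IsOrdMaltsev C) := by
  have a := maltsev_iff_refl hC
  have b := maltsev_iff_difunctional hC
  have c := refl_compose hC
  have d := compose_permute hC
  have e : CongruencesPermute C → EffectiveCongruencesPermute C :=
    fun h X R S hR _ hS _ => h X R S hR hS
  have f := effective_maltsev hC
  exact ⟨⟨d, fun h => c (a.2 (f (e h)))⟩, ⟨e, fun h => d (c (a.2 (f h)))⟩,
    ⟨fun h => b.2 (f h), fun h => e (d (c (a.2 (b.1 h))))⟩, b.trans a.symm, a⟩

end Statement15
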